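/- arXiv:2208.04002 — 6 statements merged into one kernel-verified Lean document; each statement's English description precedes it below -/
import Mathlib

section
/- Let F be a field, V a finite-dimensional F-vector space, and Γ ⊆ Δ two subgroups of GL(V). Assume that V is semisimple as a representation of Γ and as a representation of Δ, and that the commutants of Γ and of Δ in End_F(V) are equal, i.e. {f ∈ End_F(V) : f ∘ g = g ∘ f for all g ∈ Γ} = {f ∈ End_F(V) : f ∘ g = g ∘ f for all g ∈ Δ}. Then every Δ-invariant subspace W of V on which Δ acts irreducibly (W ≠ 0 and the only Δ-invariant subspaces of W are 0 and W) is also irreducible as a representation of Γ. -/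
/-- A subspace `W` of `V` is invariant under a subgroup `Γ` of `GL(V)`. -/
def Invariant {F V : Type*} [Field F] [AddCommGroup V] [Module F V]
    (Γ : Subgroup (Module.End F V)ˣ) (W : Submodule F V) : Prop :=
  ∀ g ∈ Γ, ∀ v ∈ W, (g : Module.End F V) v ∈ W

/-- `V` is semisimple as a representation of `Γ`: every invariant subspace
admits an invariant complement. -/
def IsSemisimpleRep {F V : Type*} [Field F] [AddCommGroup V] [Module F V]
    (Γ : Subgroup (Module.End F V)ˣ) : Prop :=
  ∀ W : Submodule F V, Invariant Γ W →
    ∃ W' : Submodule F V, Invariant Γ W' ∧ IsCompl W W'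

/-- The commutant of a subgroup `Γ` of `GL(V)` in `End_F(V)`. -/
def Commutant {F V : Type*} [Field F] [AddCommGroup V] [Module F V]
    (Γ : Subgroup (Module.End F V)ˣ) : Set (Module.End F V) :=
  {f | ∀ g ∈ Γ, f * (g : Module.End F V) = (g : Module.End F V) * f}

/-- `Γ` acts irreducibly on the subspace `W`: `W ≠ 0` and the only
`Γ`-invariant subspaces of `W` are `0` and `W`. -/
def IrreducibleOn {F V : Type*} [Field F] [AddCommGroup V] [Module F V]
    (Γ : Subgroup (Module.End F V)ˣ) (W : Submodule F V) : Prop :=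
  W ≠ ⊥ ∧ ∀ U : Submodule F V, U ≤ W → Invariant Γ U → U = ⊥ ∨ U = W

theorem commute_projection_iff {R M : Type*} [Ring R] [AddCommGroup M] [Module R M]
    {p q : Submodule R M} (hpq : IsCompl p q) {f : Module.End R M} :
    Commute (p.projection q hpq) f ↔ p ∈ f.invtSubmodule ∧ q ∈ f.invtSubmodule := by
  rw [LinearMap.IsIdempotentElem.commute_iff (Submodule.isIdempotentElem_projection hpq),
    Submodule.range_projection, Submodule.ker_projection]

section

variable {F V : Type*} [Field F] [AddCommGroup V] [Module F V]
  {Γ Δ : Subgroup (Module.End F V)ˣ} {U U' W : Submodule F V}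

theorem projection_mem_commutant_iff (hUU' : IsCompl U U') :
    U.projection U' hUU' ∈ Commutant Γ ↔ Invariant Γ U ∧ Invariant Γ U' :=
  (forall₂_congr fun (_ : (Module.End F V)ˣ) _ => commute_projection_iff hUU').trans forall₂_and

theorem Invariant.of_commutant_subset (hΓ : IsSemisimpleRep Γ)
    (hcomm : Commutant Γ ⊆ Commutant Δ) (hU : Invariant Γ U) : Invariant Δ U := by
  obtain ⟨U', hU', hUU'⟩ := hΓ U hU
  have hproj : U.projection U' hUU' ∈ Commutant Γ :=
    (projection_mem_commutant_iff hUU').2 ⟨hU, hU'⟩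
  exact ((projection_mem_commutant_iff hUU').1 (hcomm hproj)).1

theorem irreducibleOn_of_commutant_eq_general (hΓ : IsSemisimpleRep Γ)
    (hcomm : Commutant Γ ⊆ Commutant Δ) (hW : IrreducibleOn Δ W) : IrreducibleOn Γ W :=
  ⟨hW.1, fun U hUW hU => hW.2 U hUW (hU.of_commutant_subset hΓ hcomm)⟩

end

/-- If `Γ ⊆ Δ` are subgroups of `GL(V)`, both acting semisimply on the
finite-dimensional space `V` with equal commutants in `End_F(V)`, then every
`Δ`-invariant subspace on which `Δ` acts irreducibly is also irreducible as a
representation of `Γ`. -/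
theorem irreducibleOn_of_commutant_eq
    {F V : Type*} [Field F] [AddCommGroup V] [Module F V] [FiniteDimensional F V]
    (Γ Δ : Subgroup (Module.End F V)ˣ) (hΓΔ : Γ ≤ Δ)
    (hssΓ : IsSemisimpleRep Γ) (hssΔ : IsSemisimpleRep Δ)
    (hcomm : Commutant Γ = Commutant Δ)
    (W : Submodule F V) (hWinv : Invariant Δ W) (hWirr : IrreducibleOn Δ W) :
    IrreducibleOn Γ W :=
  irreducibleOn_of_commutant_eq_general hssΓ hcomm.subset hWirr
end

section
/- Let F be a field, V a finite-dimensional F-vector space, and Γ ⊆ Δ two subgroups of GL(V). Assume that V is semisimple as a representation of Γ and as a representation of Δ, and that the commutants of Γ and of Δ in End_F(V) are equal. Let W and W' be Δ-invariant subspaces of V on each of which Δ acts irreducibly. Then there exists an F-linear isomorphism W → W' commuting with the action of every element of Γ if and only if there exists an F-linear isomorphism W → W' commuting with the action of every element of Δ. -/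
/-- A linear map `φ : W → W'` between subspaces of `V` commutes with the
(restricted) action of every element of `Γ`: whenever `g ∈ Γ` maps `w ∈ W` to
`w₂ ∈ W`, it maps `φ w` to `φ w₂`. -/
def CommutesWith {F V : Type*} [Field F] [AddCommGroup V] [Module F V]
    (Γ : Subgroup (Module.End F V)ˣ) {W W' : Submodule F V}
    (φ : W →ₗ[F] W') : Prop :=
  ∀ g ∈ Γ, ∀ w w₂ : W, (w₂ : V) = (g : Module.End F V) (w : V) →
    (φ w₂ : V) = (g : Module.End F V) (φ w : V)

section

variable {F V : Type*} [Field F] [AddCommGroup V] [Module F V]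
  {Γ Δ : Subgroup (Module.End F V)ˣ} {W W' C : Submodule F V}

theorem projection_mem_commutant_iff_s1 (hWC : IsCompl W C) :
    W.projection C hWC ∈ Commutant Γ ↔ Invariant Γ W ∧ Invariant Γ C := by
  have commute_iff (g : Module.End F V) :
      Commute (W.projection C hWC) g ↔ (∀ v ∈ W, g v ∈ W) ∧ ∀ v ∈ C, g v ∈ C := by
    rw [LinearMap.IsIdempotentElem.commute_iff (Submodule.isIdempotentElem_projection hWC),
      Submodule.range_projection, Submodule.ker_projection]
    rfl
  simp only [Commutant, Set.mem_ofPred_eq, ← commute_iff_eq, commute_iff, Invariant, forall_and]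

theorem commutesWith_iff_comp_projectionOnto_mem_commutant (hWC : IsCompl W C)
    (hp : W.projection C hWC ∈ Commutant Γ) (φ : W →ₗ[F] W') :
    CommutesWith Γ φ ↔ W'.subtype ∘ₗ φ ∘ₗ W.projectionOnto C hWC ∈ Commutant Γ := by
  constructor
  · intro hφ g hg
    ext v
    have hpv : (W.projectionOnto C hWC ((g : Module.End F V) v) : V) =
        (g : Module.End F V) (W.projectionOnto C hWC v) := LinearMap.congr_fun (hp g hg) v
    exact hφ g hg _ _ hpv
  · intro hf g hg w w₂ hw₂
    have hfw := LinearMap.congr_fun (hf g hg) (w : V)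
    simpa only [Module.End.mul_apply, LinearMap.comp_apply, ← hw₂, Submodule.subtype_apply,
      Submodule.projectionOnto_apply_left] using hfw

theorem commutesWith_iff_of_commutant_eq (hcomm : Commutant Γ = Commutant Δ)
    (hW : Invariant Δ W) (hC : Invariant Δ C) (hWC : IsCompl W C) (φ : W →ₗ[F] W') :
    CommutesWith Γ φ ↔ CommutesWith Δ φ := by
  have hpΔ : W.projection C hWC ∈ Commutant Δ := (projection_mem_commutant_iff_s1 hWC).2 ⟨hW, hC⟩
  have hpΓ : W.projection C hWC ∈ Commutant Γ := hcomm ▸ hpΔ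
  rw [commutesWith_iff_comp_projectionOnto_mem_commutant hWC hpΓ,
    commutesWith_iff_comp_projectionOnto_mem_commutant hWC hpΔ, hcomm]

theorem iso_as_subrep_iff_of_commutant_eq_general (hcomm : Commutant Γ = Commutant Δ)
    (hW : Invariant Δ W) (hC : Invariant Δ C) (hWC : IsCompl W C) :
    (∃ e : W ≃ₗ[F] W', CommutesWith Γ (e : W →ₗ[F] W')) ↔
    (∃ e : W ≃ₗ[F] W', CommutesWith Δ (e : W →ₗ[F] W')) :=
  exists_congr fun e => commutesWith_iff_of_commutant_eq hcomm hW hC hWC (e : W →ₗ[F] W')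

end

/-- If `Γ ⊆ Δ` are subgroups of `GL(V)`, both acting semisimply on the
finite-dimensional space `V` with equal commutants, and `W`, `W'` are
`Δ`-invariant subspaces on which `Δ` acts irreducibly, then `W ≅ W'` as
representations of `Γ` if and only if `W ≅ W'` as representations of `Δ`. -/
theorem iso_as_subrep_iff_of_commutant_eq
    {F V : Type*} [Field F] [AddCommGroup V] [Module F V] [FiniteDimensional F V]
    (Γ Δ : Subgroup (Module.End F V)ˣ) (hΓΔ : Γ ≤ Δ)
    (hssΓ : IsSemisimpleRep Γ) (hssΔ : IsSemisimpleRep Δ)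
    (hcomm : Commutant Γ = Commutant Δ)
    (W W' : Submodule F V) (hWinv : Invariant Δ W) (hW'inv : Invariant Δ W')
    (hWirr : IrreducibleOn Δ W) (hW'irr : IrreducibleOn Δ W') :
    (∃ e : W ≃ₗ[F] W', CommutesWith Γ (e : W →ₗ[F] W')) ↔
    (∃ e : W ≃ₗ[F] W', CommutesWith Δ (e : W →ₗ[F] W')) := by
  obtain ⟨C, hC, hWC⟩ := hssΔ W hWinv
  exact iso_as_subrep_iff_of_commutant_eq_general hcomm hWinv hC hWC
end

section
/- Let F be a field, V a finite-dimensional F-vector space, and Γ ⊆ Δ two subgroups of GL(V). Assume that V is semisimple as a representation of Γ and as a representation of Δ, and that the commutants of Γ and of Δ in End_F(V) are equal. Then a subspace W of V is Γ-invariant if and only if it is Δ-invariant; that is, the Δ-subrepresentations of V and the Γ-subrepresentations of V coincide. -/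
section Endomorphisms

variable {R M : Type*} [Ring R] [AddCommGroup M] [Module R M] {S T : Set (Module.End R M)}
  {W W' : Submodule R M}

/-- The submodules invariant under every endomorphism in `S`: the analogue for a set of
endomorphisms of `Module.End.invtSubmodule`. As `S` is an arbitrary set, invariance means
`f W ⊆ W`, not `f W = W`. -/
def invtSubmodules (S : Set (Module.End R M)) : Set (Submodule R M) :=
  {W | ∀ f ∈ S, W ∈ f.invtSubmodule}

/-- The action of `S` on `M` is semisimple, expressed through complements of invariant submodules
rather than through `IsSemisimpleModule` over the algebra generated by `S`. -/
def ActsSemisimply (S : Set (Module.End R M)) : Prop :=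
  ∀ W ∈ invtSubmodules S, ∃ W' ∈ invtSubmodules S, IsCompl W W'

lemma projection_mem_centralizer_iff (h : IsCompl W W') :
    W.projection W' h ∈ S.centralizer ↔ W ∈ invtSubmodules S ∧ W' ∈ invtSubmodules S := by
  have commute_iff (f : Module.End R M) :
      f * W.projection W' h = W.projection W' h * f ↔
        W ∈ f.invtSubmodule ∧ W' ∈ f.invtSubmodule := by
    simpa only [Submodule.range_projection, Submodule.ker_projection, commute_iff_eq, eq_comm] using
      LinearMap.IsIdempotentElem.commute_iff (T := f) (Submodule.isIdempotentElem_projection h)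
  simp only [Set.mem_centralizer_iff, commute_iff, invtSubmodules, Set.mem_ofPred_eq, forall_and]

lemma invtSubmodules_subset_of_centralizer_subset (hS : ActsSemisimply S)
    (hST : S.centralizer ⊆ T.centralizer) : invtSubmodules S ⊆ invtSubmodules T := by
  intro W hW
  obtain ⟨W', hW', hc⟩ := hS W hW
  have projection_mem : W.projection W' hc ∈ T.centralizer :=
    hST ((projection_mem_centralizer_iff hc).mpr ⟨hW, hW'⟩)
  exact ((projection_mem_centralizer_iff hc).mp projection_mem).1

theorem invariant_iff_of_commutant_eq_general (hS : ActsSemisimply S) (hT : ActsSemisimply T)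
    (hST : S.centralizer = T.centralizer) (W : Submodule R M) :
    W ∈ invtSubmodules S ↔ W ∈ invtSubmodules T :=
  ⟨fun hW ↦ invtSubmodules_subset_of_centralizer_subset hS hST.subset hW,
    fun hW ↦ invtSubmodules_subset_of_centralizer_subset hT hST.superset hW⟩

end Endomorphisms

section Subgroups

variable {F V : Type*} [Field F] [AddCommGroup V] [Module F V] {Γ : Subgroup (Module.End F V)ˣ}

lemma invariant_iff_mem_invtSubmodules {W : Submodule F V} :
    Invariant Γ W ↔ W ∈ invtSubmodules (Units.val '' (Γ : Set (Module.End F V)ˣ)) :=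
  (Set.forall_mem_image (p := (W ∈ Module.End.invtSubmodule ·))).symm

lemma isSemisimpleRep_iff_actsSemisimply :
    IsSemisimpleRep Γ ↔ ActsSemisimply (Units.val '' (Γ : Set (Module.End F V)ˣ)) := by
  simp only [IsSemisimpleRep, ActsSemisimply, invariant_iff_mem_invtSubmodules]

lemma commutant_eq_centralizer :
    Commutant Γ = (Units.val '' (Γ : Set (Module.End F V)ˣ)).centralizer := by
  ext f
  simp only [Commutant, Set.mem_ofPred_eq, Set.mem_centralizer_iff, Set.forall_mem_image,
    SetLike.mem_coe, eq_comm]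

end Subgroups

/-- If `Γ ⊆ Δ` are subgroups of `GL(V)`, both acting semisimply on the
finite-dimensional space `V` with equal commutants in `End_F(V)`, then a
subspace of `V` is `Γ`-invariant if and only if it is `Δ`-invariant. -/
theorem invariant_iff_of_commutant_eq
    {F V : Type*} [Field F] [AddCommGroup V] [Module F V] [FiniteDimensional F V]
    (Γ Δ : Subgroup (Module.End F V)ˣ) (hΓΔ : Γ ≤ Δ)
    (hssΓ : IsSemisimpleRep Γ) (hssΔ : IsSemisimpleRep Δ)
    (hcomm : Commutant Γ = Commutant Δ) :
    ∀ W : Submodule F V, Invariant Γ W ↔ Invariant Δ W := by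
  simp only [isSemisimpleRep_iff_actsSemisimply, commutant_eq_centralizer] at hssΓ hssΔ hcomm
  simpa only [invariant_iff_mem_invtSubmodules] using
    invariant_iff_of_commutant_eq_general hssΓ hssΔ hcomm
end

section
/- Let F be a field, V a finite-dimensional F-vector space, and Γ ⊆ Δ two subgroups of GL(V). Assume that V is semisimple as a representation of Γ and as a representation of Δ, and that the commutants of Γ and of Δ in End_F(V) are equal. Let W and W' be Δ-invariant subspaces of V. Then every F-linear map φ : W → W' that commutes with the action of every element of Γ also commutes with the action of every element of Δ; in other words, Hom_Γ(W, W') = Hom_Δ(W, W'). -/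
section

variable {F V : Type*} [Field F] [AddCommGroup V] [Module F V]
  {Γ Δ : Subgroup (Module.End F V)ˣ} {W W' U U' : Submodule F V}
  {φ : W →ₗ[F] W'} {ψ : U →ₗ[F] U'} {f : Module.End F V}

theorem Invariant.mono (hΓΔ : Γ ≤ Δ) (hW : Invariant Δ W) : Invariant Γ W :=
  fun g hg ↦ hW g (hΓΔ hg)

theorem CommutesWith.zero : CommutesWith Γ (0 : W →ₗ[F] W') := by
  intro g _ w w₂ _
  simp

theorem CommutesWith.of_mem_commutant (hf : f ∈ Commutant Γ) (hfφ : ∀ w : W, f w = φ w) :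
    CommutesWith Γ φ := by
  intro g hg w w₂ hw₂
  calc
    (φ w₂ : V) = f (g.val w) := by rw [← hfφ, hw₂]
    _ = g.val (f w) := LinearMap.congr_fun (hf g hg) w
    _ = g.val (φ w) := by rw [hfφ]

theorem CommutesWith.eqOn_mul (hφ : CommutesWith Γ φ) (hW : Invariant Γ W)
    (hfφ : ∀ w : W, f w = φ w) {g : (Module.End F V)ˣ} (hg : g ∈ Γ) :
    Set.EqOn (f * g.val) (g.val * f) W := by
  intro w hw
  calc
    f (g.val w) = φ ⟨g.val w, hW g hg w hw⟩ := hfφ ⟨g.val w, hW g hg w hw⟩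
    _ = g.val (φ ⟨w, hw⟩) := hφ g hg ⟨w, hw⟩ _ rfl
    _ = g.val (f w) := by rw [← hfφ]

theorem CommutesWith.mem_commutant_of_codisjoint (hφ : CommutesWith Γ φ) (hψ : CommutesWith Γ ψ)
    (hWU : Codisjoint W U) (hW : Invariant Γ W) (hU : Invariant Γ U)
    (hfφ : ∀ w : W, f w = φ w) (hfψ : ∀ u : U, f u = ψ u) : f ∈ Commutant Γ :=
  fun _ hg ↦ LinearMap.ext_on_codisjoint hWU (hφ.eqOn_mul hW hfφ hg) (hψ.eqOn_mul hU hfψ hg)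

theorem CommutesWith.exists_mem_commutant_extending (hφ : CommutesWith Γ φ) (hWU : IsCompl W U)
    (hW : Invariant Γ W) (hU : Invariant Γ U) : ∃ f ∈ Commutant Γ, ∀ w : W, f w = φ w := by
  let f : Module.End F V := LinearMap.ofIsCompl hWU (W'.subtype ∘ₗ φ) 0
  have hfφ (w : W) : f w = φ w := LinearMap.ofIsCompl_apply_left hWU w
  have hf_zero (u : U) : f u = (0 : U →ₗ[F] W') u := LinearMap.ofIsCompl_apply_right hWU u
  exact ⟨f, hφ.mem_commutant_of_codisjoint .zero hWU.codisjoint hW hU hfφ hf_zero, hfφ⟩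

theorem homΓ_eq_homΔ_of_commutant_eq_general (hcomm : Commutant Γ ⊆ Commutant Δ)
    (hWU : IsCompl W U) (hW : Invariant Γ W) (hU : Invariant Γ U) (hφ : CommutesWith Γ φ) :
    CommutesWith Δ φ := by
  obtain ⟨f, hf, hfφ⟩ := hφ.exists_mem_commutant_extending hWU hW hU
  exact .of_mem_commutant (hcomm hf) hfφ

end

/-- If `Γ ⊆ Δ` are subgroups of `GL(V)`, both acting semisimply on the
finite-dimensional space `V` with equal commutants, and `W`, `W'` are
`Δ`-invariant subspaces, then every `F`-linear map `W → W'` commuting with the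
action of `Γ` also commutes with the action of `Δ`:
`Hom_Γ(W, W') = Hom_Δ(W, W')`. -/
theorem homΓ_eq_homΔ_of_commutant_eq
    {F V : Type*} [Field F] [AddCommGroup V] [Module F V] [FiniteDimensional F V]
    (Γ Δ : Subgroup (Module.End F V)ˣ) (hΓΔ : Γ ≤ Δ)
    (hssΓ : IsSemisimpleRep Γ) (hssΔ : IsSemisimpleRep Δ)
    (hcomm : Commutant Γ = Commutant Δ)
    (W W' : Submodule F V) (hWinv : Invariant Δ W) (hW'inv : Invariant Δ W')
    (φ : W →ₗ[F] W') (hφ : CommutesWith Γ φ) : CommutesWith Δ φ := by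
  obtain ⟨U, hU, hWU⟩ := hssΓ W (hWinv.mono hΓΔ)
  exact homΓ_eq_homΔ_of_commutant_eq_general hcomm.subset hWU (hWinv.mono hΓΔ) hU hφ
end

section
/- Let F be a field, V a finite-dimensional F-vector space, G a group, ρ : G → GL(V) a representation, τ : G → G a group automorphism, μ : G → Fˣ a group homomorphism, and B : V × V → F a nondegenerate F-bilinear form satisfying B(ρ(g)x, ρ(τ(g))y) = μ(g)·B(x, y) for all g ∈ G and x, y ∈ V. Assume that V is semisimple as a representation of G (every G-invariant subspace admits a G-invariant complement) and multiplicity-free in the sense that any two G-invariant subspaces of V on which G acts irreducibly and which intersect trivially are non-isomorphic as representations of G. Let W be a G-invariant subspace of V on which G acts irreducibly, and suppose the τ-twist W^τ is isomorphic, as a representation of G, to the μ-twisted dual W^∨ ⊗ μ. Then the restriction of B to W × W is nondegenerate. -/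
/-!
The isomorphism `W^τ ≅ W^∨ ⊗ μ` is a perfect pairing `C` on `W` with the same twisted invariance as
`B`. Writing `B(x, u) = C(φ x, u)` for `x ∈ V` and `u ∈ W` therefore defines a nonzero
`G`-equivariant map `φ : V → W`. If `φ` vanished on `W`, an invariant complement of `ker φ` would be
a copy of `W` meeting `W` trivially, against multiplicity-freeness. So `φ` restricts to an
automorphism of `W` by Schur's lemma, and `B` is perfect on `W × W` because `C` is.
-/

open Function Representation

section Pairing

variable {G R M N P : Type*} [CommRing R] [AddCommGroup M] [Module R M] [AddCommGroup N]
  [Module R N] [AddCommGroup P] [Module R P]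

/-- Invariance of a pairing `b` up to the multiplier `μ` under operators `α g` on the left and `β g`
on the right. Neither `α` nor `β` has to be a homomorphism, so that `β` may be a twist
`g ↦ ρ (τ g)` of a representation by an arbitrary map `τ`. -/
def IsTwistedInvariant (α : G → Module.End R M) (β : G → Module.End R N) (μ : G → R)
    (b : M →ₗ[R] N →ₗ[R] R) : Prop :=
  ∀ g x y, b (α g x) (β g y) = μ g * b x y

theorem isTwistedInvariant_flip_of_apply_inv [Group G] (σ : Representation R G M)
    (β : G → Module.End R N) (μ : G → R) (b : N →ₗ[R] M →ₗ[R] R)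
    (hb : ∀ g u w, b (β g u) w = μ g * b u (σ g⁻¹ w)) :
    IsTwistedInvariant σ β μ b.flip := by
  intro g w u
  simp only [LinearMap.flip_apply, hb, Representation.inv_self_apply]

theorem exists_intertwiningMap_apply_eq [Monoid G] {ρ : Representation R G M}
    {σ : Representation R G P} {β : G → Module.End R N} {μ : G → R}
    {b : M →ₗ[R] N →ₗ[R] R} {c : P →ₗ[R] N →ₗ[R] R} [c.IsPerfPair]
    (hβ : ∀ g, Surjective (β g)) (hb : IsTwistedInvariant ρ β μ b)
    (hc : IsTwistedInvariant σ β μ c) :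
    ∃ φ : IntertwiningMap ρ σ, ∀ x, c (φ x) = b x := by
  let φ : M →ₗ[R] P := c.toPerfPair.symm ∘ₗ b
  have hφ (x : M) : c (φ x) = b x := c.apply_symm_toPerfPair_self (b x)
  refine ⟨φ.intertwiningMap_of_isIntertwiningMap ρ σ fun g x ↦ ?_, hφ⟩
  refine (LinearMap.IsPerfPair.bijective_left c).injective (LinearMap.ext fun y ↦ ?_)
  obtain ⟨u, rfl⟩ := hβ g y
  calc c (φ (ρ g x)) (β g u) = μ g * b x u := by rw [hφ, hb]
    _ = c (σ g (φ x)) (β g u) := by rw [hc, hφ]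

theorem nondegenerate_of_isPerfPair (b : M →ₗ[R] N →ₗ[R] R) [b.IsPerfPair] : b.Nondegenerate :=
  ⟨LinearMap.separatingLeft_iff_ker_eq_bot.2
      (LinearMap.ker_eq_bot.2 (LinearMap.IsPerfPair.bijective_left b).injective),
    LinearMap.separatingRight_iff_flip_ker_eq_bot.2
      (LinearMap.ker_eq_bot.2 (LinearMap.IsPerfPair.bijective_right b).injective)⟩

end Pairing

section Subrepresentation

theorem isCompl_toSubmodule_iff {R G M : Type*} [Semiring R] [Monoid G] [AddCommMonoid M]
    [Module R M] {ρ : Representation R G M} {U W : Subrepresentation ρ} :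
    IsCompl U.toSubmodule W.toSubmodule ↔ IsCompl U W := by
  simp only [isCompl_iff, disjoint_iff, codisjoint_iff,
    ← Subrepresentation.toSubmodule_injective.eq_iff]
  rfl

variable {F G V V' : Type*} [Field F] [Monoid G] [AddCommGroup V] [Module F V] [AddCommGroup V']
  [Module F V'] {ρ : Representation F G V} {σ : Representation F G V'}

theorem isSemisimpleRepresentation_iff_exists_isCompl :
    IsSemisimpleRepresentation ρ ↔ ∀ W : Submodule F V, (∀ g, ∀ v ∈ W, ρ g v ∈ W) →
      ∃ W' : Submodule F V, (∀ g, ∀ v ∈ W', ρ g v ∈ W') ∧ IsCompl W W' := by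
  refine ⟨fun h W hW ↦ ?_, fun h ↦ ⟨fun W ↦ ?_⟩⟩
  · obtain ⟨W', hW'⟩ := exists_isCompl (⟨W, hW⟩ : Subrepresentation ρ)
    exact ⟨W'.toSubmodule, W'.apply_mem_toSubmodule, isCompl_toSubmodule_iff.2 hW'⟩
  · obtain ⟨W', hinv, hW'⟩ := h W.toSubmodule W.apply_mem_toSubmodule
    exact ⟨⟨W', hinv⟩, isCompl_toSubmodule_iff.1 hW'⟩

/-- Subrepresentations of a subrepresentation `W` are the subrepresentations of `ρ` contained in
`W`, so that irreducibility of `W` is minimality among the nonzero subrepresentations of `ρ`. -/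
def subrepresentationOrderIsoIic (W : Subrepresentation ρ) :
    Subrepresentation W.toRepresentation ≃o Set.Iic W where
  toFun U :=
    ⟨⟨U.toSubmodule.map W.toSubmodule.subtype, by
      rintro g _ ⟨u, hu, rfl⟩
      exact ⟨_, U.apply_mem_toSubmodule g hu, rfl⟩⟩, W.toSubmodule.map_subtype_le U.toSubmodule⟩
  invFun U :=
    ⟨U.1.toSubmodule.comap W.toSubmodule.subtype, fun g _ hu ↦ U.1.apply_mem_toSubmodule g hu⟩
  left_inv U := Subrepresentation.toSubmodule_injective <|
    Submodule.comap_map_eq_of_injective W.toSubmodule.injective_subtype U.toSubmodule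
  right_inv U := Subtype.ext <| Subrepresentation.toSubmodule_injective <|
    (Submodule.map_comap_subtype _ _).trans (inf_eq_right.2 U.2)
  map_rel_iff' := Submodule.map_le_map_iff_of_injective W.toSubmodule.injective_subtype _ _

theorem isIrreducible_toRepresentation_iff (W : Subrepresentation ρ) :
    IsIrreducible W.toRepresentation ↔ W.toSubmodule ≠ ⊥ ∧ ∀ U : Submodule F V,
      U ≤ W.toSubmodule → (∀ g, ∀ v ∈ U, ρ g v ∈ U) → U = ⊥ ∨ U = W.toSubmodule := by
  rw [Representation.IsIrreducible, (subrepresentationOrderIsoIic W).isSimpleOrder_iff,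
    Set.isSimpleOrder_Iic_iff_isAtom]
  constructor
  · intro hW
    refine ⟨fun h ↦ hW.1 (Subrepresentation.toSubmodule_injective h), fun U hUW hU ↦ ?_⟩
    have hUW' : (⟨U, hU⟩ : Subrepresentation ρ) ≤ W := hUW
    exact (hW.le_iff.1 hUW').imp (congrArg Subrepresentation.toSubmodule)
      (congrArg Subrepresentation.toSubmodule)
  · rintro ⟨hW₀, hW⟩
    refine ⟨fun h ↦ hW₀ (congrArg Subrepresentation.toSubmodule h), fun U hUW ↦ ?_⟩
    have hUW' : U.toSubmodule ≠ W.toSubmodule :=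
      Subrepresentation.toSubmodule_injective.ne hUW.ne
    exact Subrepresentation.toSubmodule_injective
      ((hW U.toSubmodule hUW.le U.apply_mem_toSubmodule).resolve_right hUW')

theorem isIrreducible_of_equiv [IsIrreducible σ] (e : ρ.Equiv σ) : IsIrreducible ρ := by
  rw [irreducible_iff_isSimpleModule_asModule]
  exact IsSimpleModule.congr
    (LinearEquiv.ofBijective (IntertwiningMap.equivLinearMapAsModule ρ σ e.toIntertwiningMap)
      e.toLinearEquiv.bijective)

/-- The restriction of an intertwining map to a subrepresentation `W`, to which Schur's lemma is
applied when the target is `W` itself. -/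
def domRestrictSubrepresentation (φ : IntertwiningMap ρ σ) (W : Subrepresentation ρ) :
    IntertwiningMap W.toRepresentation σ where
  toLinearMap := φ.toLinearMap.domRestrict W.toSubmodule
  isIntertwining' g := LinearMap.ext fun w ↦ φ.isIntertwining ρ σ g w

theorem exists_disjoint_ker_nonempty_equiv_of_surjective [IsSemisimpleRepresentation ρ]
    (φ : IntertwiningMap ρ σ) (hφ : Surjective φ) :
    ∃ K : Subrepresentation ρ, Disjoint K φ.ker ∧ Nonempty (K.toRepresentation.Equiv σ) := by
  obtain ⟨K, hK⟩ := exists_isCompl φ.ker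
  have hK' : IsCompl (LinearMap.ker φ.toLinearMap) K.toSubmodule := isCompl_toSubmodule_iff.2 hK
  refine ⟨K, hK.disjoint.symm, ⟨(domRestrictSubrepresentation φ K).ofBijective ⟨?_, ?_⟩⟩⟩
  · exact LinearMap.injective_domRestrict_iff.2 hK'.symm.disjoint
  · exact (LinearMap.surjective_domRestrict_iff hφ).2 hK'.symm.codisjoint

theorem bijective_domRestrictSubrepresentation_of_ne_zero [IsSemisimpleRepresentation ρ]
    (W : Subrepresentation ρ) [IsIrreducible W.toRepresentation]
    (hW : ∀ K : Subrepresentation ρ, Disjoint K W →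
      IsEmpty (K.toRepresentation.Equiv W.toRepresentation))
    (φ : IntertwiningMap ρ W.toRepresentation) (hφ : φ ≠ 0) :
    Bijective (domRestrictSubrepresentation φ W) := by
  refine (IsIrreducible.bijective_or_eq_zero _).resolve_right fun h₀ ↦ ?_
  have hWker : W ≤ φ.ker := fun w hw ↦
    DFunLike.congr_fun h₀ (⟨w, hw⟩ : W.toSubmodule)
  obtain ⟨K, hK, ⟨e⟩⟩ := exists_disjoint_ker_nonempty_equiv_of_surjective φ
    ((IsIrreducible.surjective_or_eq_zero φ).resolve_right hφ)
  exact (hW K (hK.mono_right hWker)).false e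

end Subrepresentation

theorem twisted_pairing_nondegenerate_on_selfdual_factor_general
    {F V G : Type*} [Field F] [AddCommGroup V] [Module F V] [Group G]
    {ρ : Representation F G V} [IsSemisimpleRepresentation ρ] {τ : G → G} {μ : G → F}
    {B : V →ₗ[F] V →ₗ[F] F} (hB : IsTwistedInvariant ρ (ρ ∘ τ) μ B)
    (W : Subrepresentation ρ) [IsIrreducible W.toRepresentation]
    (hBW : B.domRestrict₂ W.toSubmodule ≠ 0)
    (hmf : ∀ K : Subrepresentation ρ, Disjoint K W →
      IsEmpty (K.toRepresentation.Equiv W.toRepresentation))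
    (C : W.toSubmodule →ₗ[F] W.toSubmodule →ₗ[F] F) [C.IsPerfPair]
    (hC : IsTwistedInvariant W.toRepresentation (W.toRepresentation ∘ τ) μ C) :
    (B.domRestrict₁₂ W.toSubmodule W.toSubmodule).Nondegenerate := by
  have hBW_inv : IsTwistedInvariant ρ (W.toRepresentation ∘ τ) μ (B.domRestrict₂ W.toSubmodule) :=
    fun g x u ↦ hB g x u
  obtain ⟨φ, hφ⟩ := exists_intertwiningMap_apply_eq
    (fun g ↦ W.toRepresentation.apply_bijective (τ g) |>.surjective) hBW_inv hC
  have hφ₀ : φ ≠ 0 := by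
    rintro rfl
    exact hBW (LinearMap.ext fun x ↦ (hφ x).symm.trans C.map_zero)
  let e := (domRestrictSubrepresentation φ W).ofBijective
    (bijective_domRestrictSubrepresentation_of_ne_zero W hmf φ hφ₀)
  have hBe : B.domRestrict₁₂ W.toSubmodule W.toSubmodule =
      C.compl₁₂ e.toLinearEquiv (LinearEquiv.refl F W.toSubmodule) :=
    LinearMap.ext fun w ↦ (hφ w).symm
  have := LinearMap.IsPerfPair.compl₁₂ C e.toLinearEquiv (LinearEquiv.refl F W.toSubmodule)
  exact hBe ▸ nondegenerate_of_isPerfPair _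

/-- Let `ρ : G → GL(V)` be a representation on a finite-dimensional `F`-vector
space, `τ` a group automorphism of `G`, `μ : G → Fˣ` a character, and `B` a
nondegenerate bilinear form satisfying `B(ρ(g)x, ρ(τ(g))y) = μ(g)·B(x,y)`.
Assume `V` is semisimple and multiplicity-free as a representation of `G`.
If `W` is a `G`-invariant irreducible subspace whose `τ`-twist `W^τ` is
isomorphic as a representation of `G` to the `μ`-twisted dual `W^∨ ⊗ μ`, then
the restriction of `B` to `W × W` is nondegenerate. -/
theorem twisted_pairing_nondegenerate_on_selfdual_factor
    {F V : Type*} [Field F] [AddCommGroup V] [Module F V] [FiniteDimensional F V]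
    {G : Type*} [Group G] (ρ : G →* (Module.End F V)ˣ) (τ : G ≃* G) (μ : G →* Fˣ)
    (B : V →ₗ[F] V →ₗ[F] F)
    (hB : ∀ (g : G) (x y : V),
      B ((ρ g : Module.End F V) x) ((ρ (τ g) : Module.End F V) y) = (μ g : F) * B x y)
    (hBnd : (∀ x : V, (∀ y : V, B x y = 0) → x = 0) ∧
            (∀ y : V, (∀ x : V, B x y = 0) → y = 0))
    (hss : ∀ W : Submodule F V, (∀ g : G, ∀ v ∈ W, (ρ g : Module.End F V) v ∈ W) →
      ∃ W' : Submodule F V,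
        (∀ g : G, ∀ v ∈ W', (ρ g : Module.End F V) v ∈ W') ∧ IsCompl W W')
    (hmf : ∀ W₁ W₂ : Submodule F V,
      (∀ g : G, ∀ v ∈ W₁, (ρ g : Module.End F V) v ∈ W₁) →
      (∀ g : G, ∀ v ∈ W₂, (ρ g : Module.End F V) v ∈ W₂) →
      (W₁ ≠ ⊥ ∧ ∀ U : Submodule F V, U ≤ W₁ →
        (∀ g : G, ∀ v ∈ U, (ρ g : Module.End F V) v ∈ U) → U = ⊥ ∨ U = W₁) →
      (W₂ ≠ ⊥ ∧ ∀ U : Submodule F V, U ≤ W₂ →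
        (∀ g : G, ∀ v ∈ U, (ρ g : Module.End F V) v ∈ U) → U = ⊥ ∨ U = W₂) →
      W₁ ⊓ W₂ = ⊥ →
      ¬ ∃ e : W₁ ≃ₗ[F] W₂, ∀ (g : G) (u u₂ : W₁),
          (u₂ : V) = (ρ g : Module.End F V) (u : V) →
          (e u₂ : V) = (ρ g : Module.End F V) (e u : V))
    (W : Submodule F V)
    (hWinv : ∀ g : G, ∀ v ∈ W, (ρ g : Module.End F V) v ∈ W)
    (hWirr : W ≠ ⊥ ∧ ∀ U : Submodule F V, U ≤ W →
      (∀ g : G, ∀ v ∈ U, (ρ g : Module.End F V) v ∈ U) → U = ⊥ ∨ U = W)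
    (hdual : ∃ Ψ : W ≃ₗ[F] (W →ₗ[F] F), ∀ (g : G) (u w : W),
      Ψ ⟨(ρ (τ g) : Module.End F V) (u : V), hWinv (τ g) (u : V) u.2⟩ w
        = (μ g : F) * Ψ u ⟨(ρ g⁻¹ : Module.End F V) (w : V), hWinv g⁻¹ (w : V) w.2⟩) :
    (∀ x ∈ W, (∀ y ∈ W, B x y = 0) → x = 0) ∧
    (∀ y ∈ W, (∀ x ∈ W, B x y = 0) → y = 0) := by
  let σ : Representation F G V := (Units.coeHom (Module.End F V)).comp ρ
  let W' : Subrepresentation σ := ⟨W, hWinv⟩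
  obtain ⟨Ψ, hΨ⟩ := hdual
  have : IsSemisimpleRepresentation σ := isSemisimpleRepresentation_iff_exists_isCompl.2 hss
  have : IsIrreducible W'.toRepresentation := (isIrreducible_toRepresentation_iff W').2 hWirr
  have hBW : B.domRestrict₂ W ≠ 0 := by
    obtain ⟨w, hw, hw₀⟩ := W.ne_bot_iff.1 hWirr.1
    exact fun h ↦ hw₀ (hBnd.2 w fun x ↦ LinearMap.congr_fun₂ h x ⟨w, hw⟩)
  have hW_mult_one (K : Subrepresentation σ) (hK : Disjoint K W') :
      IsEmpty (K.toRepresentation.Equiv W'.toRepresentation) := by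
    refine ⟨fun e ↦ hmf K.toSubmodule W K.apply_mem_toSubmodule hWinv
      ((isIrreducible_toRepresentation_iff K).1 (isIrreducible_of_equiv e)) hWirr
      (congrArg Subrepresentation.toSubmodule hK.eq_bot) ⟨e.toLinearEquiv, fun g u u₂ hu ↦ ?_⟩⟩
    obtain rfl : u₂ = K.toRepresentation g u := Subtype.ext hu
    exact congrArg Subtype.val (e.isIntertwining _ _ g u)
  have hC := isTwistedInvariant_flip_of_apply_inv W'.toRepresentation
    (W'.toRepresentation ∘ τ) (fun g ↦ (μ g : F)) Ψ.toLinearMap hΨ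
  have hnd := twisted_pairing_nondegenerate_on_selfdual_factor_general
    (ρ := σ) hB W' hBW hW_mult_one _ hC
  exact ⟨fun x hx h ↦ congrArg Subtype.val (hnd.1 ⟨x, hx⟩ fun y ↦ h y y.2),
    fun y hy h ↦ congrArg Subtype.val (hnd.2 ⟨y, hy⟩ fun x ↦ h x x.2)⟩
end

section
/- Let ℓ be a prime and n a positive integer with ℓ ≥ n, and let x ∈ GL_n(𝔽_ℓ) be unipotent, i.e. (x − 1)^n = 0. Define the n×n matrix log(x) := −∑_{i=1}^{ℓ−1} (1 − x)^i / i, and for t ∈ 𝔽_ℓ define x^t := exp(t·log(x)) where exp(y) := ∑_{i=0}^{ℓ−1} y^i / i!. Then x^t is an invertible matrix for every t ∈ 𝔽_ℓ, x^1 = x, and x^{s+t} = x^s · x^t for all s, t ∈ 𝔽_ℓ; in other words, t ↦ x^t is a group homomorphism from the additive group of 𝔽_ℓ to GL_n(𝔽_ℓ) sending 1 to x. -/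
/-!
In a commutative algebra, every derivation maps `x * exp (-log x)` to zero up to a multiple of
`(x - 1) ^ N`, the error made by truncating both series after degree `N`. For `x = 1 + X` in `K[X]`
this forces `x * exp (-log x) = 1` modulo `X ^ (N + 1)`: both sides agree at `X = 0`, and the
factors `1, …, N` that differentiation introduces are invertible in `K`. Substituting `x - 1` for
`X` gives `x * exp (-log x) = 1` whenever `(x - 1) ^ (N + 1) = 0`. The binomial theorem makes `exp`
additive on the multiples of `log x`, so `exp (log x)` is also an inverse of `exp (-log x)`, and
`exp (log x) = x`.
-/

section TruncatedExpLog

open Polynomial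
open scoped Nat

section Defs

variable (K : Type*) [Field K] {A : Type*}

/-- The truncated exponential `∑_{i ≤ N} a ^ i / i!`. The index `N` is the degree of the last term
kept, so that the `exp` of the theorem is `truncExp (ZMod ℓ) (ℓ - 1)`. -/
def truncExp [Semiring A] [Algebra K A] (N : ℕ) (a : A) : A :=
  ∑ i ∈ Finset.range (N + 1), (i ! : K)⁻¹ • a ^ i

/-- The truncated logarithm `-∑_{1 ≤ i ≤ N} (1 - x) ^ i / i`, with `N` the degree of the last term
kept, as in `truncExp`. -/
def truncLog [Ring A] [Algebra K A] (N : ℕ) (x : A) : A :=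
  -∑ i ∈ Finset.Icc 1 N, (i : K)⁻¹ • (1 - x) ^ i

end Defs

lemma isUnit_natCast_of_isUnit_factorial {R : Type*} [CommSemiring R] {N : ℕ}
    (hN : IsUnit (N ! : R)) {i : ℕ} (hi0 : i ≠ 0) (hi : i ≤ N) : IsUnit (i : R) :=
  isUnit_of_dvd_unit (Nat.cast_dvd_cast (Nat.dvd_factorial (Nat.pos_of_ne_zero hi0) hi)) hN

section Semiring

variable {K : Type*} [Field K] {A B : Type*} [Semiring A] [Algebra K A] [Semiring B] [Algebra K B]
  {N : ℕ}

lemma map_truncExp (f : A →ₐ[K] B) (N : ℕ) (a : A) :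
    f (truncExp K N a) = truncExp K N (f a) := by
  simp [truncExp]

lemma truncExp_zero (N : ℕ) : truncExp K N (0 : A) = 1 := by
  simp [truncExp, Finset.sum_range_succ']

lemma inv_factorial_smul_add_pow (hN : IsUnit (N ! : K)) {a b : A} (hab : Commute a b) :
    (N ! : K)⁻¹ • (a + b) ^ N =
      ∑ i ∈ Finset.range (N + 1), ((i ! : K)⁻¹ • a ^ i) * (((N - i)! : K)⁻¹ • b ^ (N - i)) := by
  rw [hab.add_pow, Finset.smul_sum]
  refine Finset.sum_congr rfl fun i hi => ?_
  have hiN : i ≤ N := Finset.mem_range_succ_iff.1 hi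
  have hfaci := (hN.natCast_factorial_of_le hiN).ne_zero
  have hfacNi := (hN.natCast_factorial_of_le (N.sub_le i)).ne_zero
  have hfacN := hN.ne_zero
  have hchoose : (N.choose i : K) * (i ! : K) * ((N - i)! : K) = (N ! : K) := by
    exact_mod_cast congrArg (Nat.cast (R := K)) (Nat.choose_mul_factorial_mul_factorial hiN)
  rw [smul_mul_smul_comm, ← Nat.cast_commute, ← nsmul_eq_mul, ← Nat.cast_smul_eq_nsmul K, smul_smul]
  congr 1
  field_simp
  linear_combination hchoose

lemma truncExp_add (hN : IsUnit (N ! : K)) {a b : A} (hab : Commute a b)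
    (h0 : ∀ i j, N < i + j → a ^ i * b ^ j = 0) :
    truncExp K N (a + b) = truncExp K N a * truncExp K N b := by
  set f : ℕ → ℕ → A := fun i j => ((i ! : K)⁻¹ • a ^ i) * ((j ! : K)⁻¹ • b ^ j) with hf
  have hf0 (i j : ℕ) (hij : N < i + j) : f i j = 0 := by
    simp only [hf, smul_mul_smul_comm, h0 i j hij, smul_zero]
  calc truncExp K N (a + b)
      = ∑ m ∈ Finset.range (N + 1), ∑ i ∈ Finset.range (m + 1), f i (m - i) :=
        Finset.sum_congr rfl fun m hm => inv_factorial_smul_add_pow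
          (hN.natCast_factorial_of_le (Finset.mem_range_succ_iff.1 hm)) hab
    _ = ∑ i ∈ Finset.range (N + 1), ∑ j ∈ Finset.range (N + 1 - i), f i j :=
        Finset.sum_range_diag_flip _ f
    _ = ∑ i ∈ Finset.range (N + 1), ∑ j ∈ Finset.range (N + 1), f i j :=
        Finset.sum_congr rfl fun i _ => Finset.sum_subset (by grind) fun j _ hj =>
          hf0 i j (by grind)
    _ = truncExp K N a * truncExp K N b := (Finset.sum_mul_sum _ _ _ _).symm

lemma truncExp_add_smul (hN : IsUnit (N ! : K)) {a : A} (ha : a ^ (N + 1) = 0) (s t : K) :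
    truncExp K N ((s + t) • a) = truncExp K N (s • a) * truncExp K N (t • a) := by
  rw [add_smul]
  refine truncExp_add hN (((Commute.refl a).smul_left s).smul_right t) fun i j hij => ?_
  rw [_root_.smul_pow, _root_.smul_pow, smul_mul_smul_comm, ← pow_add,
    pow_eq_zero_of_le hij ha, smul_zero]

end Semiring

section Ring

variable {K : Type*} [Field K] {A B : Type*} [Ring A] [Algebra K A] [Ring B] [Algebra K B] {N : ℕ}

lemma truncExp_mul_truncExp_neg (hN : IsUnit (N ! : K)) {a : A} (ha : a ^ (N + 1) = 0) :
    truncExp K N a * truncExp K N (-a) = 1 := by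
  simpa [truncExp_zero] using (truncExp_add_smul hN ha 1 (-1)).symm

lemma isUnit_truncExp (hN : IsUnit (N ! : K)) {a : A} (ha : a ^ (N + 1) = 0) :
    IsUnit (truncExp K N a) := by
  have ha' : (-a) ^ (N + 1) = 0 := by rw [neg_pow, ha, mul_zero]
  exact isUnit_iff_exists.2 ⟨truncExp K N (-a), truncExp_mul_truncExp_neg hN ha,
    by simpa using truncExp_mul_truncExp_neg hN ha'⟩

lemma map_truncLog (f : A →ₐ[K] B) (N : ℕ) (x : A) :
    f (truncLog K N x) = truncLog K N (f x) := by
  simp [truncLog]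

lemma sub_one_dvd_truncLog (N : ℕ) (x : A) : x - 1 ∣ truncLog K N x := by
  refine (Finset.dvd_sum fun i hi => dvd_smul_of_dvd _ ?_).neg_right
  have hi0 : i ≠ 0 := by grind
  rw [← neg_sub 1 x, neg_dvd]
  exact dvd_pow_self _ hi0

lemma truncLog_one (N : ℕ) : truncLog K N (1 : A) = 0 := by
  simpa using sub_one_dvd_truncLog (K := K) N (1 : A)

end Ring

section Derivation

variable {K : Type*} [Field K] {A : Type*} [CommRing A] [Algebra K A]
  {M : Type*} [AddCommGroup M] [Module A M] [Module K M] {N : ℕ}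

lemma derivation_truncLog (hN : IsUnit (N ! : K)) (D : Derivation K A M) (x : A) :
    D (truncLog K N x) = (∑ i ∈ Finset.range N, (1 - x) ^ i) • D x := by
  rw [truncLog, ← Finset.Ico_add_one_right_eq_Icc, Finset.sum_Ico_eq_sum_range, map_neg, map_sum,
    ← Finset.sum_neg_distrib, Finset.sum_smul, Nat.add_sub_cancel]
  refine Finset.sum_congr rfl fun i hi => ?_
  have hi1 : ((i + 1 : ℕ) : K) ≠ 0 :=
    (isUnit_natCast_of_isUnit_factorial hN i.succ_ne_zero (Finset.mem_range.1 hi)).ne_zero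
  rw [add_comm 1 i, D.map_smul, D.leibniz_pow, Nat.add_sub_cancel, ← Nat.cast_smul_eq_nsmul K,
    inv_smul_smul₀ hi1, map_sub, D.map_one_eq_zero, zero_sub, smul_neg, neg_neg]

lemma smul_derivation_truncLog (hN : IsUnit (N ! : K)) (D : Derivation K A M) (x : A) :
    x • D (truncLog K N x) = (1 - (1 - x) ^ N) • D x := by
  rw [derivation_truncLog hN, smul_smul, ← mul_neg_geom_sum, sub_sub_cancel]

lemma derivation_truncExp [IsScalarTower K A M] (hN : IsUnit (N ! : K)) (D : Derivation K A M)
    (a : A) :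
    D (truncExp K N a) = (truncExp K N a - (N ! : K)⁻¹ • a ^ N) • D a := by
  rw [truncExp, Finset.sum_range_succ, add_sub_cancel_right, ← Finset.sum_range_succ,
    Finset.sum_range_succ', map_add, map_sum, Finset.sum_smul, pow_zero, D.map_smul,
    D.map_one_eq_zero, smul_zero, add_zero]
  refine Finset.sum_congr rfl fun i hi => ?_
  have hi1 : ((i + 1 : ℕ) : K) ≠ 0 :=
    (isUnit_natCast_of_isUnit_factorial hN i.succ_ne_zero (Finset.mem_range.1 hi)).ne_zero
  rw [D.map_smul, D.leibniz_pow, Nat.add_sub_cancel, ← Nat.cast_smul_eq_nsmul K, smul_smul,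
    Nat.factorial_succ, Nat.cast_mul, mul_inv_rev, inv_mul_cancel_right₀ hi1, smul_assoc]

lemma sub_one_pow_dvd_derivation_mul_truncExp_neg_truncLog (hN : IsUnit (N ! : K))
    (D : Derivation K A A) (x : A) :
    (x - 1) ^ N ∣ D (x * truncExp K N (-truncLog K N x)) := by
  set L := truncLog K N x
  set c : A := (N ! : K)⁻¹ • (-L) ^ N
  have hxL : x * D L = (1 - (1 - x) ^ N) * D x := smul_derivation_truncLog hN D x
  have hD : D (x * truncExp K N (-L)) =
      (truncExp K N (-L) * (1 - x) ^ N + c * (1 - (1 - x) ^ N)) * D x := by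
    rw [D.leibniz, derivation_truncExp hN, map_neg]
    simp only [smul_eq_mul]
    linear_combination (c - truncExp K N (-L)) * hxL
  have hx : (x - 1) ^ N ∣ (1 - x) ^ N := pow_dvd_pow_of_dvd (by rw [← neg_sub, neg_dvd]) N
  have hcdvd : (x - 1) ^ N ∣ c :=
    dvd_smul_of_dvd _ (pow_dvd_pow_of_dvd (sub_one_dvd_truncLog N x).neg_right N)
  rw [hD]
  exact ((hx.mul_left _).add (hcdvd.mul_right _)).mul_right _

end Derivation

lemma X_pow_succ_dvd_of_X_pow_dvd_derivative {R : Type*} [CommSemiring R] {N : ℕ}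
    (hN : IsUnit (N ! : R)) {p : R[X]} (h0 : p.coeff 0 = 0) (hp : X ^ N ∣ derivative p) :
    X ^ (N + 1) ∣ p := by
  rw [X_pow_dvd_iff] at hp ⊢
  rintro (_ | k) hk
  · exact h0
  · have hunit : IsUnit ((k : R) + 1) :=
      mod_cast isUnit_natCast_of_isUnit_factorial hN k.succ_ne_zero (Nat.lt_succ_iff.1 hk)
    rw [← hunit.mul_left_eq_zero, ← coeff_derivative]
    exact hp k (Nat.lt_of_succ_lt_succ hk)

section Unipotent

variable {K : Type*} [Field K] {A : Type*} [Ring A] [Algebra K A] {N : ℕ}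

lemma X_pow_succ_dvd_one_add_X_mul_truncExp_neg_truncLog_sub_one (hN : IsUnit (N ! : K)) :
    X ^ (N + 1) ∣ (1 + X) * truncExp K N (-truncLog K N (1 + X : K[X])) - 1 := by
  apply X_pow_succ_dvd_of_X_pow_dvd_derivative hN
  · rw [coeff_zero_eq_aeval_zero, map_sub, map_mul, map_truncExp, map_neg, map_truncLog, map_add,
      map_one, aeval_X, add_zero, truncLog_one, neg_zero, truncExp_zero, mul_one, sub_self]
  · have h := sub_one_pow_dvd_derivation_mul_truncExp_neg_truncLog hN derivative' (1 + X : K[X])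
    rw [add_sub_cancel_left] at h
    rwa [derivative_sub, derivative_one, sub_zero]

lemma mul_truncExp_neg_truncLog (hN : IsUnit (N ! : K)) {x : A} (hx : (x - 1) ^ (N + 1) = 0) :
    x * truncExp K N (-truncLog K N x) = 1 := by
  have h := aeval_eq_zero_of_dvd_aeval_eq_zero (x := x - 1)
    (X_pow_succ_dvd_one_add_X_mul_truncExp_neg_truncLog_sub_one hN) (by simpa using hx)
  simpa [map_truncExp, map_truncLog, sub_eq_zero] using h

lemma truncLog_pow_eq_zero {n : ℕ} {x : A} (hx : (x - 1) ^ n = 0) (N : ℕ) :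
    truncLog K N x ^ n = 0 := by
  have hX : X ∣ truncLog K N (1 + X : K[X]) := by
    have h := sub_one_dvd_truncLog (K := K) N (1 + X : K[X])
    rwa [add_sub_cancel_left] at h
  have h := aeval_eq_zero_of_dvd_aeval_eq_zero (x := x - 1) (pow_dvd_pow_of_dvd hX n)
    (by simpa using hx)
  simpa [map_truncLog] using h

lemma truncExp_truncLog (hN : IsUnit (N ! : K)) {x : A} (hx : (x - 1) ^ (N + 1) = 0) :
    truncExp K N (truncLog K N x) = x := by
  have hexp := truncExp_mul_truncExp_neg hN (truncLog_pow_eq_zero (K := K) hx N)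
  have hunit := isUnit_truncExp hN (a := -truncLog K N x) (by
    rw [neg_pow, truncLog_pow_eq_zero hx, mul_zero])
  exact hunit.mul_right_cancel (hexp.trans (mul_truncExp_neg_truncLog hN hx).symm)

theorem one_parameter_subgroup_of_unipotent_general (hN : IsUnit (N ! : K)) {x : A}
    (hx : (x - 1) ^ (N + 1) = 0) :
    (∀ t : K, IsUnit (truncExp K N (t • truncLog K N x))) ∧
    truncExp K N ((1 : K) • truncLog K N x) = x ∧
    (∀ s t : K, truncExp K N ((s + t) • truncLog K N x) =
      truncExp K N (s • truncLog K N x) * truncExp K N (t • truncLog K N x)) := by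
  have hlog : truncLog K N x ^ (N + 1) = 0 := truncLog_pow_eq_zero hx N
  refine ⟨fun t => isUnit_truncExp hN ?_, ?_, truncExp_add_smul hN hlog⟩
  · rw [_root_.smul_pow, hlog, smul_zero]
  · rw [one_smul, truncExp_truncLog hN hx]

end Unipotent

end TruncatedExpLog

/-- Let `ℓ ≥ n` with `ℓ` prime and `n ≥ 1`, and let `x ∈ GL_n(𝔽_ℓ)` be
unipotent, i.e. `(x − 1)^n = 0`.  With `log x := −∑_{i=1}^{ℓ−1} (1−x)^i / i`
and `x^t := exp(t·log x)` where `exp y := ∑_{i=0}^{ℓ−1} y^i / i!`, the matrix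
`x^t` is invertible for every `t ∈ 𝔽_ℓ`, `x^1 = x`, and
`x^{s+t} = x^s · x^t`; i.e. `t ↦ x^t` is a homomorphism from the additive
group `𝔽_ℓ` to `GL_n(𝔽_ℓ)` sending `1` to `x`. -/
theorem one_parameter_subgroup_of_unipotent
    (ℓ n : ℕ) (hℓ : ℓ.Prime) (hn : 0 < n) (hln : n ≤ ℓ)
    (x : Matrix (Fin n) (Fin n) (ZMod ℓ)) (hx : (x - 1) ^ n = 0) :
    ∀ logx : Matrix (Fin n) (Fin n) (ZMod ℓ),
      logx = -∑ i ∈ Finset.Icc 1 (ℓ - 1), ((i : ZMod ℓ))⁻¹ • (1 - x) ^ i →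
    ∀ xpow : ZMod ℓ → Matrix (Fin n) (Fin n) (ZMod ℓ),
      xpow = (fun t => ∑ i ∈ Finset.range ℓ,
        ((Nat.factorial i : ZMod ℓ))⁻¹ • (t • logx) ^ i) →
    (∀ t : ZMod ℓ, IsUnit (xpow t)) ∧
    xpow 1 = x ∧
    (∀ s t : ZMod ℓ, xpow (s + t) = xpow s * xpow t) := by
  rintro _ rfl _ rfl
  have : Fact ℓ.Prime := ⟨hℓ⟩
  obtain ⟨N, rfl⟩ : ∃ N, ℓ = N + 1 := ⟨ℓ - 1, (Nat.succ_pred_prime hℓ).symm⟩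
  exact one_parameter_subgroup_of_unipotent_general
    ((IsUnit.natCast_factorial_iff_of_charP (N + 1)).2 N.lt_succ_self) (pow_eq_zero_of_le hln hx)
end
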